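/- Let f : ℂ₊ → ℂ be holomorphic on the upper half-plane with Im f(z) ≥ 0 for all z ∈ ℂ₊, and suppose there is a constant C > 0 such that Im f(x+iy) ≤ C/y for all x ∈ ℝ, y > 0. Then there exist a unique finite positive Borel measure μ on ℝ and a unique real number a such that f(z) = a + (1/π) ∫_ℝ (u − z)⁻¹ dμ(u) for all z ∈ ℂ₊. -/

import Mathlib

open MeasureTheory

/-!
The real-valued `u = Im f` is a nonnegative harmonic function. Transported to the unit disc by the
Cayley transform, it is the Poisson integral of a finite measure on the circle: represent its
dilations and use compactness. Pulling this measure back to `ℝ` gives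
`u z = b * Im z + ∫ (1 + t²) Im (t - z)⁻¹ dρ(t)`, where `b` is the mass at the point sent to `∞`.
The bound `u z ≤ C / Im z` along the imaginary axis forces `b = 0` and, by Fatou's lemma, the
finiteness of `(1 + t²) ρ`. Hence `f` has the same imaginary part as a multiple of the Cauchy
transform `∫ (t - z)⁻¹ dμ(t)` of a finite measure, so they differ by a real constant.

For uniqueness, the constant is the limit of `f` along the imaginary axis, and the imaginary part
of the Cauchy transform of `μ` at height `γ` is the density of the convolution of `μ` with the
Cauchy distribution of scale `γ`, which determines `μ` as `γ → 0`.
-/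

open Complex Filter InnerProductSpace Metric ProbabilityTheory Topology
open scoped NNReal

lemma harmonicAt_comp_analyticAt {u : ℂ → ℝ} {φ : ℂ → ℂ} {z : ℂ}
    (hu : HarmonicAt u (φ z)) (hφ : AnalyticAt ℂ φ z) : HarmonicAt (u ∘ φ) z := by
  obtain ⟨r, hr, hball⟩ := Metric.eventually_nhds_iff_ball.1 hu.eventually
  obtain ⟨F, hF, hFu⟩ := HarmonicOnNhd.exists_analyticOnNhd_ball_re_eq (f := u) hball
  have hcomp : (fun w => (F (φ w)).re) =ᶠ[𝓝 z] u ∘ φ := by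
    filter_upwards [hφ.continuousAt (ball_mem_nhds _ hr)] with w hw using hFu hw
  exact (harmonicAt_congr_nhds hcomp).1
    ((hF _ (mem_ball_self hr)).comp hφ).harmonicAt_re

section Disc

variable {c w : ℂ} {R : ℝ}

lemma continuousOn_poissonKernel_sphere (hw : w ∈ ball c R) :
    ContinuousOn (poissonKernel c w) (sphere c R) := by
  rw [poissonKernel_eq_re_herglotzRieszKernel]
  simpa only [abs_of_pos (pos_of_mem_ball hw)] using
    continuous_re.comp_continuousOn (continuousOn_herglotzRieszKernel_sphere hw)

lemma continuous_poissonKernel_sphere (hw : w ∈ ball c R) :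
    Continuous fun ζ : sphere c R => poissonKernel c w ζ :=
  continuousOn_iff_continuous_domRestrict.1 (continuousOn_poissonKernel_sphere hw)

lemma poissonKernel_center {ζ : ℂ} (hζ : ζ ≠ c) : poissonKernel c c ζ = 1 := by
  simp [poissonKernel_def, sub_ne_zero.2 hζ]

lemma exists_finiteMeasure_circleAverage_mul_eq_integral (hR : 0 ≤ R) {v : ℂ → ℝ}
    (hv : ContinuousOn v (sphere c R)) (hv0 : ∀ ζ ∈ sphere c R, 0 ≤ v ζ) :
    ∃ ν : FiniteMeasure (sphere c R), ∀ k : ℂ → ℝ, ContinuousOn k (sphere c R) →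
      Real.circleAverage (k • v) c R = ∫ ζ, k ζ ∂(ν : Measure (sphere c R)) := by
  let p : ℝ → sphere c R := fun θ => ⟨circleMap c R θ, circleMap_mem_sphere c hR θ⟩
  have hp : Continuous p := (continuous_circleMap c R).subtype_mk _
  let d : ℝ → ℝ := fun θ => (2 * Real.pi)⁻¹ * v (p θ)
  have hd : Continuous d :=
    continuous_const.mul (hv.comp_continuous (continuous_subtype_val.comp hp) fun θ => (p θ).2)
  have hd0 : ∀ θ, 0 ≤ d θ := fun θ => mul_nonneg (by positivity) (hv0 _ (p θ).2)
  let arc : Measure ℝ := volume.restrict (Set.Ioc 0 (2 * Real.pi))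
  have hd_int : Integrable d arc := hd.integrableOn_Ioc
  have hfin : IsFiniteMeasure (arc.withDensity fun θ => ENNReal.ofReal (d θ)) :=
    isFiniteMeasure_withDensity_ofReal hd_int.2
  refine ⟨⟨(arc.withDensity fun θ => ENNReal.ofReal (d θ)).map p, inferInstance⟩, fun k hk => ?_⟩
  have hk' : Continuous fun ζ : sphere c R => k ζ := continuousOn_iff_continuous_domRestrict.1 hk
  calc Real.circleAverage (k • v) c R
      = ∫ θ, d θ * k (p θ) ∂arc := by
        rw [Real.circleAverage_def, intervalIntegral.integral_of_le (by positivity), smul_eq_mul,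
          ← integral_const_mul]
        refine integral_congr_ae (ae_of_all _ fun θ => ?_)
        simp only [d, p, Pi.smul_apply', smul_eq_mul]
        ring
    _ = ∫ θ, k (p θ) ∂arc.withDensity fun θ => ENNReal.ofReal (d θ) := by
        rw [integral_withDensity_eq_integral_toReal_smul (by fun_prop) (by simp)]
        simp only [ENNReal.toReal_ofReal (hd0 _), smul_eq_mul]
    _ = ∫ ζ, k ζ ∂(arc.withDensity fun θ => ENNReal.ofReal (d θ)).map p :=
        (integral_map hp.aemeasurable hk'.aestronglyMeasurable).symm

lemma exists_finiteMeasure_poisson_of_closedBall (hR : 0 < R) {u : ℂ → ℝ}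
    (hu : HarmonicOnNhd u (closedBall c R)) (hu0 : ∀ ζ ∈ sphere c R, 0 ≤ u ζ) :
    ∃ ν : FiniteMeasure (sphere c R), ν.mass = Real.toNNReal (u c) ∧
      ∀ w ∈ ball c R, u w = ∫ ζ, poissonKernel c w ζ ∂(ν : Measure (sphere c R)) := by
  obtain ⟨ν, hν⟩ := exists_finiteMeasure_circleAverage_mul_eq_integral hR.le
    (hu.continuousOn.mono sphere_subset_closedBall) hu0
  have hrep : ∀ w ∈ ball c R, u w = ∫ ζ, poissonKernel c w ζ ∂(ν : Measure (sphere c R)) :=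
    fun w hw => by
      rw [← hν _ (continuousOn_poissonKernel_sphere hw), hu.circleAverage_poissonKernel_smul hw]
  refine ⟨ν, ?_, hrep⟩
  have hker : ∀ ζ : sphere c R, poissonKernel c c ζ = 1 :=
    fun ζ => poissonKernel_center (ne_of_mem_sphere ζ.2 hR.ne')
  rw [hrep c (mem_ball_self hR)]
  simp only [hker, integral_const, smul_eq_mul, mul_one]
  exact Real.toNNReal_coe.symm

lemma exists_finiteMeasure_poisson_dilation (hR : 0 < R) {u : ℂ → ℝ}
    (hu : HarmonicOnNhd u (ball c R)) (hu0 : ∀ w ∈ ball c R, 0 ≤ u w) {r : ℝ}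
    (hr : r ∈ Set.Ioo 0 1) :
    ∃ ν : FiniteMeasure (sphere c R), ν.mass = Real.toNNReal (u c) ∧ ∀ w ∈ ball c R,
      u (c + r * (w - c)) = ∫ ζ, poissonKernel c w ζ ∂(ν : Measure (sphere c R)) := by
  let dil : ℂ → ℂ := fun w => c + r * (w - c)
  have hdil : Set.MapsTo dil (closedBall c R) (ball c R) := by
    intro w hw
    rw [mem_closedBall, dist_eq_norm] at hw
    simp only [dil, mem_ball, dist_self_add_left, norm_mul, norm_real, Real.norm_of_nonneg hr.1.le]
    nlinarith [hr.1, hr.2]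
  have hcenter : dil c = c := by simp [dil]
  simpa only [Function.comp_apply, hcenter] using
    exists_finiteMeasure_poisson_of_closedBall hR (u := u ∘ dil)
      (fun w hw => harmonicAt_comp_analyticAt (hu _ (hdil hw)) (by fun_prop))
      (fun ζ hζ => hu0 _ (hdil (sphere_subset_closedBall hζ)))

theorem exists_finiteMeasure_poisson_of_ball (hR : 0 < R) {u : ℂ → ℝ}
    (hu : HarmonicOnNhd u (ball c R)) (hu0 : ∀ w ∈ ball c R, 0 ≤ u w) :
    ∃ ν : FiniteMeasure (sphere c R),
      ∀ w ∈ ball c R, u w = ∫ ζ, poissonKernel c w ζ ∂(ν : Measure (sphere c R)) := by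
  choose! ν hmass hν using fun r : ℝ => exists_finiteMeasure_poisson_dilation hR hu hu0 (r := r)
  let U : Ultrafilter ℝ := Ultrafilter.of (𝓝[<] 1)
  have hU : (U : Filter ℝ) ≤ 𝓝[<] 1 := Ultrafilter.of_le _
  have hU_mem : ∀ᶠ r in (U : Filter ℝ), r ∈ Set.Ioo (0 : ℝ) 1 := hU (Ioo_mem_nhdsLT one_pos)
  obtain ⟨ν₀, -, hlim⟩ :=
    (isCompact_setOfPred_finiteMeasure_le_of_compactSpace (sphere c R)
      (Real.toNNReal (u c))).ultrafilter_le_nhds (U.map ν)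
      (le_principal_iff.2 (hU_mem.mono fun r hr => (hmass r hr).le))
  refine ⟨ν₀, fun w hw => ?_⟩
  have hint : Tendsto (fun r : ℝ => u (c + r * (w - c))) U
      (𝓝 (∫ ζ, poissonKernel c w ζ ∂(ν₀ : Measure (sphere c R)))) :=
    (FiniteMeasure.tendsto_iff_forall_integral_tendsto.1 hlim
      (.mkOfCompact ⟨_, continuous_poissonKernel_sphere hw⟩)).congr'
      (hU_mem.mono fun r hr => (hν r hr w hw).symm)
  have hval : Tendsto (fun r : ℝ => u (c + r * (w - c))) U (𝓝 (u w)) := by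
    have hdil_lim : Tendsto (fun r : ℝ => c + r * (w - c)) (𝓝 1) (𝓝 w) := by
      simpa using (show Continuous fun r : ℝ => c + r * (w - c) by fun_prop).tendsto 1
    exact (hu.continuousOn.continuousAt (isOpen_ball.mem_nhds hw)).tendsto.comp
      (hdil_lim.mono_left (hU.trans nhdsWithin_le_nhds))
  exact tendsto_nhds_unique hval hint

end Disc

section CauchyKernel

variable {z : ℂ}

lemma im_inv_ofReal_sub (t : ℝ) (z : ℂ) : ((t - z : ℂ)⁻¹).im = z.im / ‖t - z‖ ^ 2 := by
  simp [inv_im, normSq_eq_norm_sq]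

lemma ofReal_sub_ne_zero (hz : 0 < z.im) (t : ℝ) : (t - z : ℂ) ≠ 0 := fun h => by
  have him := congrArg im h
  simp only [sub_im, ofReal_im, zero_sub, zero_im] at him
  linarith

lemma continuous_inv_ofReal_sub (hz : 0 < z.im) : Continuous fun t : ℝ => (t - z : ℂ)⁻¹ :=
  (continuous_ofReal.sub continuous_const).inv₀ (ofReal_sub_ne_zero hz)

lemma norm_inv_ofReal_sub_le (hz : 0 < z.im) (t : ℝ) : ‖(t - z : ℂ)⁻¹‖ ≤ z.im⁻¹ := by
  rw [norm_inv]
  refine inv_anti₀ hz ?_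
  simpa [abs_of_pos hz] using abs_im_le_norm (t - z : ℂ)

lemma im_inv_ofReal_sub_nonneg (hz : 0 ≤ z.im) (t : ℝ) : 0 ≤ ((t - z : ℂ)⁻¹).im := by
  rw [im_inv_ofReal_sub]
  positivity

lemma continuous_one_add_sq_mul_im_inv (hz : 0 < z.im) :
    Continuous fun t : ℝ => (1 + t ^ 2) * ((t - z : ℂ)⁻¹).im :=
  (continuous_const.add (continuous_pow 2)).mul
    (continuous_im.comp (continuous_inv_ofReal_sub hz))

lemma tendsto_mul_im_inv_ofReal_sub_mul_I (t : ℝ) :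
    Tendsto (fun y : ℝ => y * ((t - y * I : ℂ)⁻¹).im) atTop (𝓝 1) := by
  have hlim : Tendsto (fun y : ℝ => (1 + (t / y) ^ 2)⁻¹) atTop (𝓝 1) := by
    have hdiv : Tendsto (fun y : ℝ => t / y) atTop (𝓝 0) :=
      tendsto_const_nhds.div_atTop tendsto_id
    simpa using ((hdiv.pow 2).const_add 1).inv₀ (by norm_num)
  refine hlim.congr' ?_
  filter_upwards [eventually_ne_atTop 0] with y hy
  rw [im_inv_ofReal_sub, ← normSq_eq_norm_sq, normSq_apply]
  simp only [sub_re, sub_im, ofReal_re, ofReal_im, re_ofReal_mul, im_ofReal_mul, I_re, I_im]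
  field_simp
  ring

end CauchyKernel

section Cayley

/-- The Cayley transform: it maps the open upper half-plane onto the open unit disc and `ℝ` onto
the unit circle without `1`, and transports the Poisson representation between the two. -/
noncomputable def cayley (z : ℂ) : ℂ := (z - I) / (z + I)

/-- The inverse of the Cayley transform, with the junk value `0` at `1` in place of `∞`. -/
noncomputable def cayleyInv (w : ℂ) : ℂ := I * (1 + w) / (1 - w)

variable {z w : ℂ}

lemma add_I_ne_zero (hz : 0 ≤ z.im) : z + I ≠ 0 := fun h => by
  have him := congrArg im h
  simp only [add_im, I_im, zero_im] at him
  linarith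

lemma cayleyInv_cayley (hz : z + I ≠ 0) : cayleyInv (cayley z) = z := by
  have hnum : 1 + cayley z = 2 * z / (z + I) := by
    rw [cayley]; field_simp; ring
  have hden : 1 - cayley z = 2 * I / (z + I) := by
    rw [cayley]; field_simp; ring
  rw [cayleyInv, hnum, hden]
  field_simp [I_ne_zero]

lemma cayley_cayleyInv (hw : w ≠ 1) : cayley (cayleyInv w) = w := by
  have hw' : 1 - w ≠ 0 := sub_ne_zero.2 hw.symm
  have hnum : cayleyInv w - I = 2 * I * w / (1 - w) := by
    rw [cayleyInv]; field_simp; ring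
  have hden : cayleyInv w + I = 2 * I / (1 - w) := by
    rw [cayleyInv]; field_simp; ring
  rw [cayley, hnum, hden]
  field_simp [I_ne_zero]

lemma im_cayleyInv (w : ℂ) : (cayleyInv w).im = poissonKernel 0 w 1 := by
  rw [cayleyInv, mul_div_assoc, I_mul_im, poissonKernel_eq_re_herglotzRieszKernel]
  simp only [Function.comp_apply, herglotzRieszKernel_def, sub_zero]

lemma im_cayleyInv_pos (hw : w ∈ ball 0 1) : 0 < (cayleyInv w).im := by
  have hw1 : ‖w‖ < 1 := by simpa using hw
  have hne : 1 - w ≠ 0 := sub_ne_zero.2 fun h => by simp [← h] at hw1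
  rw [im_cayleyInv, poissonKernel_def]
  simp only [sub_zero, norm_one, one_pow]
  exact div_pos (by nlinarith [norm_nonneg w]) (by positivity)

lemma cayley_re_cayleyInv (hw : ‖w‖ = 1) (hw1 : w ≠ 1) : cayley (cayleyInv w).re = w := by
  have hreal : ((cayleyInv w).re : ℂ) = cayleyInv w := by
    apply Complex.ext <;> simp [im_cayleyInv, poissonKernel_def, hw]
  rw [hreal, cayley_cayleyInv hw1]

lemma one_sub_norm_cayley_sq (hz : z + I ≠ 0) :
    1 - ‖cayley z‖ ^ 2 = 4 * z.im / ‖z + I‖ ^ 2 := by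
  have hz' : ‖z + I‖ ≠ 0 := norm_ne_zero_iff.2 hz
  rw [cayley, norm_div]
  field_simp
  simp only [← normSq_eq_norm_sq, normSq_apply, add_re, add_im, sub_re, sub_im, I_re, I_im]
  ring

lemma cayley_mem_ball (hz : 0 < z.im) : cayley z ∈ ball 0 1 := by
  have hz' := add_I_ne_zero hz.le
  have hpos : 0 < 1 - ‖cayley z‖ ^ 2 := by rw [one_sub_norm_cayley_sq hz']; positivity
  rw [mem_ball_zero_iff]
  nlinarith [norm_nonneg (cayley z)]

lemma norm_cayley_ofReal (t : ℝ) : ‖cayley t‖ = 1 := by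
  have hsq := one_sub_norm_cayley_sq (add_I_ne_zero (ofReal_im t).ge)
  rw [ofReal_im, mul_zero, zero_div] at hsq
  nlinarith [norm_nonneg (cayley t)]

lemma cayley_sub_cayley (hz : z + I ≠ 0) (hw : w + I ≠ 0) :
    cayley z - cayley w = 2 * I * (z - w) / ((z + I) * (w + I)) := by
  rw [cayley, cayley]
  field_simp
  ring

lemma poissonKernel_cayley_one (hz : z + I ≠ 0) : poissonKernel 0 (cayley z) 1 = z.im := by
  rw [← im_cayleyInv, cayleyInv_cayley hz]

lemma poissonKernel_cayley_ofReal (hz : z + I ≠ 0) (t : ℝ) :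
    poissonKernel 0 (cayley z) (cayley t) = (1 + t ^ 2) * ((t - z : ℂ)⁻¹).im := by
  have ht := add_I_ne_zero (ofReal_im t).ge
  have ht_sq : ‖(t : ℂ) + I‖ ^ 2 = 1 + t ^ 2 := by
    rw [← normSq_eq_norm_sq, normSq_apply]
    simp only [add_re, add_im, ofReal_re, ofReal_im, I_re, I_im]
    ring
  rw [poissonKernel_def, im_inv_ofReal_sub]
  simp only [sub_zero]
  rw [norm_cayley_ofReal, one_pow, one_sub_norm_cayley_sq hz, cayley_sub_cayley ht hz, norm_div,
    norm_mul, norm_mul, norm_mul, norm_I, norm_ofNat, div_pow, mul_pow, mul_pow, mul_pow, ht_sq]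
  rcases eq_or_ne (‖(t : ℂ) - z‖) 0 with h0 | h0
  · simp [h0]
  · have hz' : ‖z + I‖ ≠ 0 := norm_ne_zero_iff.2 hz
    field_simp
    ring

end Cayley

section ResolventTransform

variable {μ : Measure ℝ} {z : ℂ}

lemma resolventTransform_eq_integral_inv (μ : Measure ℝ) (z : ℂ) :
    resolventTransform μ z = ∫ t : ℝ, (t - z : ℂ)⁻¹ ∂μ := by
  simp [resolventTransform_def, resolvent, Ring.inverse_eq_inv']

variable [IsFiniteMeasure μ]

lemma integrable_inv_ofReal_sub (hz : 0 < z.im) :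
    Integrable (fun t : ℝ => (t - z : ℂ)⁻¹) μ :=
  .of_bound (continuous_inv_ofReal_sub hz).aestronglyMeasurable z.im⁻¹
    (ae_of_all _ (norm_inv_ofReal_sub_le hz))

lemma im_resolventTransform (hz : 0 < z.im) :
    (resolventTransform μ z).im = ∫ t : ℝ, ((t - z : ℂ)⁻¹).im ∂μ := by
  rw [resolventTransform_eq_integral_inv]
  exact (imCLM.integral_comp_comm (integrable_inv_ofReal_sub hz)).symm

lemma norm_resolventTransform_le (hz : 0 < z.im) :
    ‖resolventTransform μ z‖ ≤ z.im⁻¹ * μ.real Set.univ := by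
  rw [resolventTransform_eq_integral_inv]
  exact norm_integral_le_of_norm_le_const (ae_of_all _ (norm_inv_ofReal_sub_le hz))

lemma differentiableOn_resolventTransform :
    DifferentiableOn ℂ (resolventTransform μ) {z : ℂ | 0 < z.im} := fun z hz =>
  have hz' : z ∉ algebraMap ℝ ℂ '' μ.support := by rintro ⟨t, -, rfl⟩; simp at hz
  (hasDerivAt_resolventTransform z hz').differentiableAt.differentiableWithinAt

lemma tendsto_resolventTransform_mul_I_atTop :
    Tendsto (fun y : ℝ => resolventTransform μ (y * I)) atTop (𝓝 0) := by
  refine squeeze_zero_norm' (a := fun y : ℝ => y⁻¹ * μ.real Set.univ) ?_ ?_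
  · filter_upwards [eventually_gt_atTop 0] with y hy
    simpa using norm_resolventTransform_le (μ := μ) (z := y * I) (by simpa using hy)
  · simpa using tendsto_inv_atTop_zero.mul_const (μ.real Set.univ)

end ResolventTransform

section HalfPlane

variable {u : ℂ → ℝ}

theorem exists_poisson_of_upperHalfPlane (hu : HarmonicOnNhd u {z | 0 < z.im})
    (hu0 : ∀ z : ℂ, 0 < z.im → 0 ≤ u z) :
    ∃ (b : ℝ) (ρ : Measure ℝ), 0 ≤ b ∧ IsFiniteMeasure ρ ∧ ∀ z : ℂ, 0 < z.im →
      u z = b * z.im + ∫ t : ℝ, (1 + t ^ 2) * ((t - z : ℂ)⁻¹).im ∂ρ := by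
  have hcayleyInv : ∀ w ∈ ball (0 : ℂ) 1, AnalyticAt ℂ cayleyInv w := fun w hw =>
    AnalyticAt.div (by fun_prop) (by fun_prop) (sub_ne_zero.2 fun h => by simp [← h] at hw)
  obtain ⟨ν, hν⟩ := exists_finiteMeasure_poisson_of_ball one_pos
    (fun w hw => harmonicAt_comp_analyticAt (hu _ (im_cayleyInv_pos hw)) (hcayleyInv w hw))
    (fun w hw => hu0 _ (im_cayleyInv_pos hw))
  let s : Set (sphere (0 : ℂ) 1) := {ζ | (ζ : ℂ) = 1}
  have hs : MeasurableSet s := (isClosed_eq continuous_subtype_val continuous_const).measurableSet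
  let τ : sphere (0 : ℂ) 1 → ℝ := fun ζ => (cayleyInv ζ).re
  have hτ : Measurable τ := by unfold τ cayleyInv; fun_prop
  refine ⟨(ν : Measure _).real s, ((ν : Measure _).restrict sᶜ).map τ, measureReal_nonneg,
    inferInstance, fun z hz => ?_⟩
  have hz' := add_I_ne_zero hz.le
  have hcont := continuous_poissonKernel_sphere (cayley_mem_ball hz)
  calc u z = ∫ ζ, poissonKernel 0 (cayley z) ζ ∂(ν : Measure (sphere (0 : ℂ) 1)) := by
        rw [← hν _ (cayley_mem_ball hz), Function.comp_apply, cayleyInv_cayley hz']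
    _ = (∫ ζ in s, poissonKernel 0 (cayley z) ζ ∂ν) +
        ∫ ζ in sᶜ, poissonKernel 0 (cayley z) ζ ∂ν :=
        (integral_add_compl hs
          (hcont.integrable_of_hasCompactSupport (.of_compactSpace _))).symm
    _ = (∫ _ in s, z.im ∂ν) + ∫ ζ in sᶜ, (1 + τ ζ ^ 2) * ((τ ζ - z : ℂ)⁻¹).im ∂ν := by
        congr 1
        · refine setIntegral_congr_fun hs fun ζ hζ => ?_
          rw [hζ, poissonKernel_cayley_one hz']
        · refine setIntegral_congr_fun hs.compl fun ζ hζ => ?_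
          rw [← poissonKernel_cayley_ofReal hz' (τ ζ),
            cayley_re_cayleyInv (mem_sphere_zero_iff_norm.1 ζ.2) hζ]
    _ = _ := by
        rw [setIntegral_const, smul_eq_mul,
          integral_map hτ.aemeasurable (continuous_one_add_sq_mul_im_inv hz).aestronglyMeasurable]

lemma integrable_of_tendsto_of_integral_norm_le {α E : Type*} [MeasurableSpace α]
    [NormedAddCommGroup E] {μ : Measure α} {F : ℕ → α → E} {g : α → E} {C : ℝ}
    (hF : ∀ n, Integrable (F n) μ) (hFC : ∀ n, ∫ x, ‖F n x‖ ∂μ ≤ C)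
    (hlim : ∀ᵐ x ∂μ, Tendsto (fun n => F n x) atTop (𝓝 (g x))) : Integrable g μ := by
  refine ⟨aestronglyMeasurable_of_tendsto_ae _ (fun n => (hF n).1) hlim, ?_⟩
  have hbound (n : ℕ) : ∫⁻ x, ‖F n x‖ₑ ∂μ ≤ ENNReal.ofReal C := by
    rw [← ofReal_integral_norm_eq_lintegral_enorm (hF n)]
    exact ENNReal.ofReal_le_ofReal (hFC n)
  calc ∫⁻ x, ‖g x‖ₑ ∂μ = ∫⁻ x, liminf (fun n => ‖F n x‖ₑ) atTop ∂μ :=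
        lintegral_congr_ae (hlim.mono fun x hx => hx.enorm.liminf_eq.symm)
    _ ≤ liminf (fun n => ∫⁻ x, ‖F n x‖ₑ ∂μ) atTop := lintegral_liminf_le' fun n => (hF n).1.enorm
    _ ≤ ENNReal.ofReal C := liminf_le_of_frequently_le' (.of_forall hbound)
    _ < ⊤ := ENNReal.ofReal_lt_top

lemma integrable_one_add_sq_mul_im_inv (ρ : Measure ℝ) [IsFiniteMeasure ρ] {z : ℂ}
    (hz : 0 < z.im) : Integrable (fun t : ℝ => (1 + t ^ 2) * ((t - z : ℂ)⁻¹).im) ρ := by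
  obtain ⟨M, hM⟩ := (isCompact_sphere (0 : ℂ) 1).exists_bound_of_continuousOn
    (continuousOn_poissonKernel_sphere (cayley_mem_ball hz))
  refine .of_bound (continuous_one_add_sq_mul_im_inv hz).aestronglyMeasurable M
    (ae_of_all _ fun t => ?_)
  rw [← poissonKernel_cayley_ofReal (add_I_ne_zero hz.le)]
  exact hM _ (mem_sphere_zero_iff_norm.2 (norm_cayley_ofReal t))

lemma integrable_one_add_sq_of_integral_le {ρ : Measure ℝ} [IsFiniteMeasure ρ] {C : ℝ}
    (h : ∀ y : ℝ, 0 < y → ∫ t : ℝ, (1 + t ^ 2) * ((t - y * I : ℂ)⁻¹).im ∂ρ ≤ C / y) :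
    Integrable (fun t : ℝ => 1 + t ^ 2) ρ := by
  have hpos (n : ℕ) : 0 < (n + 1 : ℝ) := by positivity
  have him (n : ℕ) : 0 < (((n + 1 : ℝ) : ℂ) * I).im := by simpa using hpos n
  have hnonneg (n : ℕ) (t : ℝ) :
      0 ≤ (n + 1) * ((1 + t ^ 2) * ((t - (n + 1 : ℝ) * I : ℂ)⁻¹).im) :=
    mul_nonneg (hpos n).le
      (mul_nonneg (by positivity) (im_inv_ofReal_sub_nonneg (him n).le t))
  refine integrable_of_tendsto_of_integral_norm_le (C := C)
    (F := fun n (t : ℝ) => (n + 1) * ((1 + t ^ 2) * ((t - (n + 1 : ℝ) * I : ℂ)⁻¹).im))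
    (fun n => (integrable_one_add_sq_mul_im_inv ρ (him n)).const_mul _)
    (fun n => ?_) (ae_of_all _ fun t => ?_)
  · simp only [Real.norm_of_nonneg (hnonneg n _)]
    rw [integral_const_mul, mul_comm, ← le_div_iff₀ (hpos n)]
    exact h _ (hpos n)
  · have hlim := ((tendsto_mul_im_inv_ofReal_sub_mul_I t).comp
      (tendsto_atTop_add_const_right _ (1 : ℝ) tendsto_natCast_atTop_atTop)).const_mul (1 + t ^ 2)
    rw [mul_one] at hlim
    exact hlim.congr fun n => mul_left_comm _ _ _

theorem exists_im_resolventTransform_of_le_div {C : ℝ} (hu : HarmonicOnNhd u {z | 0 < z.im})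
    (hu0 : ∀ z : ℂ, 0 < z.im → 0 ≤ u z) (huC : ∀ z : ℂ, 0 < z.im → u z ≤ C / z.im) :
    ∃ μ : Measure ℝ, IsFiniteMeasure μ ∧
      ∀ z : ℂ, 0 < z.im → u z = Real.pi⁻¹ * (resolventTransform μ z).im := by
  obtain ⟨b, ρ, hb, hρ, hrep⟩ := exists_poisson_of_upperHalfPlane hu hu0
  have hbound (y : ℝ) (hy : 0 < y) :
      b * y + ∫ t : ℝ, (1 + t ^ 2) * ((t - y * I : ℂ)⁻¹).im ∂ρ ≤ C / y := by
    have hyI : 0 < (y * I : ℂ).im := by simpa using hy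
    simpa [hrep _ hyI] using huC _ hyI
  have hint : Integrable (fun t : ℝ => 1 + t ^ 2) ρ :=
    integrable_one_add_sq_of_integral_le fun y hy =>
      (le_add_of_nonneg_left (by positivity)).trans (hbound y hy)
  have hb_zero : b = 0 := by
    refine hb.antisymm' (ge_of_tendsto (f := fun y : ℝ => C / y ^ 2) (x := atTop)
      (tendsto_const_nhds.div_atTop (tendsto_pow_atTop two_ne_zero)) ?_)
    filter_upwards [eventually_gt_atTop 0] with y hy
    have hyI : 0 ≤ (y * I : ℂ).im := by simpa using hy.le
    have hker : 0 ≤ ∫ t : ℝ, (1 + t ^ 2) * ((t - y * I : ℂ)⁻¹).im ∂ρ :=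
      integral_nonneg fun t => mul_nonneg (by positivity) (im_inv_ofReal_sub_nonneg hyI t)
    rw [sq, ← div_div, le_div_iff₀ hy]
    exact (le_add_of_nonneg_right hker).trans (hbound y hy)
  have hfin : IsFiniteMeasure (ρ.withDensity fun t => ENNReal.ofReal (Real.pi * (1 + t ^ 2))) :=
    isFiniteMeasure_withDensity_ofReal (hint.const_mul _).2
  refine ⟨_, hfin, fun z hz => ?_⟩
  rw [im_resolventTransform hz, integral_withDensity_eq_integral_toReal_smul (by fun_prop)
    (by simp), hrep z hz, hb_zero, zero_mul, zero_add, ← integral_const_mul]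
  refine integral_congr_ae (ae_of_all _ fun t => ?_)
  simp only
  rw [ENNReal.toReal_ofReal (by positivity), smul_eq_mul, mul_assoc,
    inv_mul_cancel_left₀ Real.pi_ne_zero]

end HalfPlane

section Uniqueness

lemma conv_withDensity {G : Type*} [AddGroup G] [MeasurableSpace G] [MeasurableAdd₂ G]
    [MeasurableNeg G] (μ ν : Measure G) [SFinite μ] [SFinite ν] [ν.IsAddLeftInvariant]
    {p : G → ENNReal} (hp : Measurable p) :
    μ ∗ ν.withDensity p = ν.withDensity fun x => ∫⁻ y, p (-y + x) ∂μ := by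
  refine Measure.ext_of_lintegral _ fun g hg => ?_
  have hmeas : Measurable fun x => ∫⁻ y, p (-y + x) ∂μ := by fun_prop
  calc ∫⁻ x, g x ∂(μ ∗ ν.withDensity p)
      = ∫⁻ y, ∫⁻ x, p x * g (y + x) ∂ν ∂μ := by
        rw [Measure.lintegral_conv hg]
        refine lintegral_congr fun y => ?_
        exact lintegral_withDensity_eq_lintegral_mul _ hp (by fun_prop)
    _ = ∫⁻ y, ∫⁻ x, p (-y + x) * g x ∂ν ∂μ := by
        refine lintegral_congr fun y => ?_
        rw [← lintegral_add_left_eq_self (fun x => p (-y + x) * g x) y]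
        simp only [neg_add_cancel_left]
    _ = ∫⁻ x, (∫⁻ y, p (-y + x) ∂μ) * g x ∂ν := by
        rw [lintegral_lintegral_swap (by fun_prop)]
        exact lintegral_congr fun x => lintegral_mul_const _ (by fun_prop)
    _ = ∫⁻ x, g x ∂ν.withDensity fun x => ∫⁻ y, p (-y + x) ∂μ :=
        (lintegral_withDensity_eq_lintegral_mul _ hmeas hg).symm

theorem measure_eq_of_conv_eq_of_tendsto_charFun {E ι : Type*} [NormedAddCommGroup E]
    [InnerProductSpace ℝ E] [CompleteSpace E] [SecondCountableTopology E] [MeasurableSpace E]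
    [BorelSpace E]
    {μ ν : Measure E} [IsFiniteMeasure μ] [IsFiniteMeasure ν]
    {κ : ι → Measure E} [∀ i, IsFiniteMeasure (κ i)] {l : Filter ι} [l.NeBot]
    (hconv : ∀ᶠ i in l, μ ∗ κ i = ν ∗ κ i)
    (hκ : ∀ t, Tendsto (fun i => charFun (κ i) t) l (𝓝 1)) : μ = ν := by
  refine Measure.ext_of_charFun (funext fun t => ?_)
  obtain ⟨i, hi, hne⟩ := (hconv.and ((hκ t).eventually_ne one_ne_zero)).exists
  have hmul : charFun μ t * charFun (κ i) t = charFun ν t * charFun (κ i) t := by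
    simpa only [charFun_conv] using congrArg (charFun · t) hi
  exact mul_right_cancel₀ hne hmul

lemma map_mul_left_cauchyMeasure (γ : ℝ≥0) :
    (cauchyMeasure 0 1).map ((γ : ℝ) * ·) = cauchyMeasure 0 γ := by
  rcases eq_or_ne γ 0 with rfl | hγ
  · simp
  have hγ' : (γ : ℝ) ≠ 0 := NNReal.coe_ne_zero.2 hγ
  have hpdf (x : ℝ) : cauchyPDF 0 1 x = ENNReal.ofReal γ * cauchyPDF 0 γ (γ * x) := by
    rw [cauchyPDF_def, cauchyPDF_def, ← ENNReal.ofReal_mul γ.coe_nonneg, cauchyPDFReal_def,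
      cauchyPDFReal_def]
    congr 1
    push_cast
    field_simp
    ring
  have hmul : Measurable ((γ : ℝ) * ·) := by fun_prop
  refine Measure.ext_of_lintegral _ fun g hg => ?_
  rw [cauchyMeasure_of_scale_ne_zero _ one_ne_zero, cauchyMeasure_of_scale_ne_zero _ hγ]
  calc ∫⁻ x, g x ∂(volume.withDensity (cauchyPDF 0 1)).map ((γ : ℝ) * ·)
      = ∫⁻ x, cauchyPDF 0 1 x * g (γ * x) := by
        rw [lintegral_map hg hmul]
        exact lintegral_withDensity_eq_lintegral_mul _ (by fun_prop) (by fun_prop)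
    _ = ENNReal.ofReal γ * ∫⁻ x, cauchyPDF 0 γ (γ * x) * g (γ * x) := by
        rw [← lintegral_const_mul _ (by fun_prop)]
        exact lintegral_congr fun x => by rw [hpdf, mul_assoc]
    _ = ∫⁻ x, cauchyPDF 0 γ x * g x ∂(ENNReal.ofReal |γ| • volume.map ((γ : ℝ) * ·)) := by
        rw [lintegral_smul_measure, lintegral_map (by fun_prop) hmul, smul_eq_mul,
          abs_of_nonneg γ.coe_nonneg]
    _ = ∫⁻ x, g x ∂volume.withDensity (cauchyPDF 0 γ) := by
        rw [Real.smul_map_volume_mul_left hγ']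
        exact (lintegral_withDensity_eq_lintegral_mul _ (by fun_prop) hg).symm

lemma tendsto_charFun_cauchyMeasure_scale_zero (t : ℝ) :
    Tendsto (fun γ : ℝ≥0 => charFun (cauchyMeasure 0 γ) t) (𝓝 0) (𝓝 1) := by
  have hscale (γ : ℝ≥0) : charFun (cauchyMeasure 0 γ) t = charFun (cauchyMeasure 0 1) (γ * t) := by
    rw [← map_mul_left_cauchyMeasure γ, charFun_map_mul]
  have hcont : Continuous fun γ : ℝ≥0 => charFun (cauchyMeasure 0 1) (γ * t) :=
    continuous_charFun.comp (by fun_prop)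
  simpa [hscale] using hcont.tendsto 0

lemma cauchyPDFReal_eq_im_inv (γ : ℝ≥0) (x t : ℝ) :
    cauchyPDFReal 0 γ (-t + x) = Real.pi⁻¹ * ((t - (x + γ * I) : ℂ)⁻¹).im := by
  rw [cauchyPDFReal_def, im_inv_ofReal_sub, ← normSq_eq_norm_sq, normSq_apply]
  simp only [sub_re, sub_im, add_re, add_im, ofReal_re, ofReal_im, mul_re, mul_im, I_re, I_im]
  rw [div_eq_mul_inv, mul_assoc]
  ring_nf

lemma conv_cauchyMeasure_eq_withDensity (μ : Measure ℝ) [IsFiniteMeasure μ] {γ : ℝ≥0}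
    (hγ : γ ≠ 0) :
    μ ∗ cauchyMeasure 0 γ = volume.withDensity fun x : ℝ =>
      ENNReal.ofReal (Real.pi⁻¹ * (resolventTransform μ (x + γ * I : ℂ)).im) := by
  rw [cauchyMeasure_of_scale_ne_zero _ hγ, conv_withDensity _ _ (measurable_cauchyPDF 0 γ)]
  congr 1
  funext x
  have hz : 0 < (x + γ * I : ℂ).im := by simpa using pos_iff_ne_zero.2 hγ
  have hint : Integrable (fun t : ℝ => Real.pi⁻¹ * ((t - (x + γ * I) : ℂ)⁻¹).im) μ :=
    (integrable_inv_ofReal_sub hz).im.const_mul _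
  rw [im_resolventTransform hz, ← integral_const_mul, ofReal_integral_eq_lintegral_ofReal hint
    (ae_of_all _ fun t => mul_nonneg (by positivity) (im_inv_ofReal_sub_nonneg hz.le t))]
  exact lintegral_congr fun t => by rw [cauchyPDF_def, cauchyPDFReal_eq_im_inv]

theorem measure_eq_of_im_resolventTransform_eq {μ ν : Measure ℝ} [IsFiniteMeasure μ]
    [IsFiniteMeasure ν]
    (h : ∀ z : ℂ, 0 < z.im → (resolventTransform μ z).im = (resolventTransform ν z).im) :
    μ = ν := by
  refine measure_eq_of_conv_eq_of_tendsto_charFun (l := 𝓝[≠] (0 : ℝ≥0)) ?_ fun t =>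
    (tendsto_charFun_cauchyMeasure_scale_zero t).mono_left nhdsWithin_le_nhds
  filter_upwards [self_mem_nhdsWithin] with γ hγ
  have hpos (x : ℝ) : 0 < (x + γ * I : ℂ).im := by simpa using pos_iff_ne_zero.2 hγ
  simp only [conv_cauchyMeasure_eq_withDensity _ hγ, h _ (hpos _)]

end Uniqueness

theorem exists_eq_add_resolventTransform {f : ℂ → ℂ} {C : ℝ}
    (hf : DifferentiableOn ℂ f {z : ℂ | 0 < z.im})
    (him : ∀ z : ℂ, 0 < z.im → 0 ≤ (f z).im)
    (hbdd : ∀ z : ℂ, 0 < z.im → (f z).im ≤ C / z.im) :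
    ∃ (μ : Measure ℝ) (a : ℝ), IsFiniteMeasure μ ∧
      ∀ z : ℂ, 0 < z.im → f z = a + 1 / (Real.pi : ℂ) * resolventTransform μ z := by
  have hopen : IsOpen {z : ℂ | 0 < z.im} := isOpen_lt continuous_const continuous_im
  have hconn : IsConnected {z : ℂ | 0 < z.im} :=
    ⟨⟨I, by simp⟩, (convex_halfSpace_im_gt 0).isPreconnected⟩
  obtain ⟨μ, hμ, hrep⟩ := exists_im_resolventTransform_of_le_div
    (fun z hz => (hf.analyticAt (hopen.mem_nhds hz)).harmonicAt_im) him hbdd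
  have hdiff : AnalyticOnNhd ℂ (fun z => f z - 1 / (Real.pi : ℂ) * resolventTransform μ z)
      {z : ℂ | 0 < z.im} :=
    (hf.sub (differentiableOn_resolventTransform.const_mul _)).analyticOnNhd hopen
  have him_zero : ∀ z ∈ {z : ℂ | 0 < z.im},
      (f z - 1 / (Real.pi : ℂ) * resolventTransform μ z).im = 0 := fun z hz => by
    rw [sub_im, hrep z hz, one_div, ← ofReal_inv, im_ofReal_mul, sub_self]
  obtain ⟨a, ha⟩ := hdiff.eq_const_add_im_mul_I_of_re_eq_const him_zero hopen hconn
  exact ⟨μ, a, hμ, fun z hz => sub_eq_iff_eq_add.1 (by simpa using ha z hz)⟩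

lemma tendsto_mul_I_atTop_of_eq_add_resolventTransform {f : ℂ → ℂ} {μ : Measure ℝ}
    [IsFiniteMeasure μ] {a c : ℂ} (hf : ∀ z : ℂ, 0 < z.im → f z = a + c * resolventTransform μ z) :
    Tendsto (fun y : ℝ => f (y * I)) atTop (𝓝 a) := by
  have hlim : Tendsto (fun y : ℝ => a + c * resolventTransform μ (y * I)) atTop (𝓝 a) := by
    simpa using (tendsto_resolventTransform_mul_I_atTop.const_mul c).const_add a
  refine hlim.congr' ?_
  filter_upwards [eventually_gt_atTop 0] with y hy
  rw [hf _ (by simpa using hy)]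

/-- Herglotz theorem for holomorphic functions mapping the upper half-plane
into the closed upper half-plane, with decay `Im f(x+iy) ≤ C/y`: there are a
unique finite positive Borel measure `μ` on `ℝ` and a unique real `a` with
`f(z) = a + (1/π) ∫ (u - z)⁻¹ dμ(u)`. -/
theorem herglotz_holomorphic
    (f : ℂ → ℂ) (C : ℝ) (hC : 0 < C)
    (hf : DifferentiableOn ℂ f {z : ℂ | 0 < z.im})
    (him : ∀ z : ℂ, 0 < z.im → 0 ≤ (f z).im)
    (hbdd : ∀ z : ℂ, 0 < z.im → (f z).im ≤ C / z.im) :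
    ∃! p : Measure ℝ × ℝ, IsFiniteMeasure p.1 ∧
      ∀ z : ℂ, 0 < z.im →
        f z = (p.2 : ℂ) + (1 / (Real.pi : ℂ)) * ∫ u : ℝ, ((u : ℂ) - z)⁻¹ ∂p.1 := by
  simp only [← resolventTransform_eq_integral_inv]
  obtain ⟨μ, a, hμ, hrep⟩ := exists_eq_add_resolventTransform hf him hbdd
  refine ⟨(μ, a), ⟨hμ, hrep⟩, ?_⟩
  rintro ⟨ν, b⟩ ⟨hν : IsFiniteMeasure ν, hrep' : ∀ z : ℂ, 0 < z.im → f z = b + _⟩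
  have hab : b = a := ofReal_injective <| tendsto_nhds_unique
    (tendsto_mul_I_atTop_of_eq_add_resolventTransform hrep')
    (tendsto_mul_I_atTop_of_eq_add_resolventTransform hrep)
  have hνμ : ν = μ := measure_eq_of_im_resolventTransform_eq fun z hz => by
    have hadd := (hrep' z hz).symm.trans (hrep z hz)
    rw [hab] at hadd
    rw [mul_left_cancel₀ (by simp [Real.pi_ne_zero]) (add_left_cancel hadd)]
  rw [hab, hνμ]
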